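/- Let v be a radial weight in the class D̂ satisfying M₂(v) = sup_{0<r<1} (∫₀^r v̂(s)/(1-s)⁴ ds)^{1/2} (∫_r¹ (1-s)²/v̂(s) ds)^{1/2} < ∞. Then for every q > 0 there exists a constant C = C(q,v) > 0 such that Σ_{n=k}^∞ 2^{-3qn} (v_{2^{n+1}})^{-q} ≤ C · 2^{-3qk} (v_{2^{k+1}})^{-q} for all integers k ≥ 0, where v_x = ∫₀¹ s^x v(s) ds. -/

import Mathlib

open MeasureTheory Real Set Filter

noncomputable section

/-- `hatw v r = ∫_r^1 v(s) ds`. -/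
def hatw (v : ℝ → ℝ) (r : ℝ) : ℝ := ∫ s in r..1, v s

/-- A radial weight: measurable, positive on `[0,1)`, integrable on `(0,1)`. -/
def RadialWeight (v : ℝ → ℝ) : Prop :=
  Measurable v ∧ (∀ r ∈ Set.Ico (0:ℝ) 1, 0 < v r) ∧
    MeasureTheory.IntegrableOn v (Set.Ioo 0 1)

/-- Membership in the class `D̂`. -/
def DoublingD (v : ℝ → ℝ) : Prop :=
  ∃ C : ℝ, 1 ≤ C ∧ ∀ r ∈ Set.Ico (0:ℝ) 1, hatw v r ≤ C * hatw v ((1+r)/2)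

/-- Squared Dirichlet-type norm `‖f‖_{D_v}^2`. -/
def DvSq (v : ℝ → ℝ) (f : ℂ → ℂ) : ENNReal :=
  (‖f 0‖₊ : ENNReal)^2 +
    (ENNReal.ofReal Real.pi)⁻¹ *
      ∫⁻ z in Metric.ball (0:ℂ) 1, (‖deriv f z‖₊ : ENNReal)^2 * ENNReal.ofReal (v ‖z‖)

/-- The Muckenhoupt type quantity `M₁(v)`. -/
def M1v (v : ℝ → ℝ) : ENNReal :=
  ⨆ r ∈ Set.Ioo (0:ℝ) 1,
    (∫⁻ s in Set.Ioo r 1, ENNReal.ofReal (hatw v s / (1-s)^2)) ^ (1/2 : ℝ) *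
    (∫⁻ s in Set.Ioo (0:ℝ) r, ENNReal.ofReal (1 / hatw v s)) ^ (1/2 : ℝ)

/-- The Muckenhoupt type quantity `M₂(v)`. -/
def M2v (v : ℝ → ℝ) : ENNReal :=
  ⨆ r ∈ Set.Ioo (0:ℝ) 1,
    (∫⁻ s in Set.Ioo (0:ℝ) r, ENNReal.ofReal (hatw v s / (1-s)^4)) ^ (1/2 : ℝ) *
    (∫⁻ s in Set.Ioo r 1, ENNReal.ofReal ((1-s)^2 / hatw v s)) ^ (1/2 : ℝ)

/-- The moment `v_x = ∫_0^1 s^x v(s) ds`. -/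
def vx (v : ℝ → ℝ) (x : ℕ) : ℝ := ∫ s in (0:ℝ)..1, s^x * v s

/-- `M_∞(s,f)`, the maximum of `|f|` on the circle of radius `s`. -/
def Minf (f : ℂ → ℂ) (s : ℝ) : ℝ := sSup ((fun z => ‖f z‖) '' Metric.sphere (0:ℂ) s)

/-- `M₂(r,h)`. -/
def M2mean (h : ℂ → ℂ) (r : ℝ) : ℝ :=
  Real.sqrt ((2*Real.pi)⁻¹ * ∫ θ in (-Real.pi)..Real.pi, ‖h ((r:ℂ) * Complex.exp (θ * Complex.I))‖^2)

/-- The norm of `B(2,∞)` (with values in `[0,∞]`). -/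
def B2infE (g : ℂ → ℂ) : ENNReal :=
  (‖g 0‖₊ : ENNReal) +
    ⨆ r ∈ Set.Ioo (0:ℝ) 1, ENNReal.ofReal (M2mean (deriv g) r * Real.sqrt (1-r))

/-- The `p`-th power of the norm of `B(2,p)` (with values in `[0,∞]`). -/
def B2pE (p : ℝ) (g : ℂ → ℂ) : ENNReal :=
  ENNReal.ofReal (‖g 0‖ ^ p) +
    ∫⁻ r in Set.Ioo (0:ℝ) 1, ENNReal.ofReal (M2mean (deriv g) r ^ p * (1-r)^(p/2-1))

/-- The generalized Hilbert operator `H_g`. -/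
def Hg (g f : ℂ → ℂ) (z : ℂ) : ℂ := ∫ t in Set.Ioo (0:ℝ) 1, f t * deriv g (t * z)

/-- The Hilbert operator `H` acting on functions on `[0,1)`. -/
def Hop (φ : ℝ → ℂ) (z : ℂ) : ℂ := ∫ t in Set.Ioo (0:ℝ) 1, φ t / (1 - t * z)

/-- The sublinear Hilbert operator `H̃`. -/
def Htil (φ : ℝ → ℂ) (z : ℂ) : ℂ := ∫ t in Set.Ioo (0:ℝ) 1, (‖φ t‖ : ℂ) / (1 - t * z)

/-- Squared norm in `L²_{V̂₂}`. -/
def L2V2sq (v : ℝ → ℝ) (φ : ℝ → ℂ) : ENNReal :=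
  ∫⁻ t in Set.Ioo (0:ℝ) 1, (‖φ t‖₊ : ENNReal)^2 * ENNReal.ofReal (hatw v t / (1-t)^2)

/-- Taylor coefficient `ĝ(k)` of `g` at the origin. -/
def gcoef (g : ℂ → ℂ) (k : ℕ) : ℂ := iteratedDeriv k g 0 / (Nat.factorial k)

/-!
Write `r_n = 1 - 2⁻ⁿ` and `β_n = 8⁻ⁿ / v_{2^{n+1}}`. The doubling condition makes the moment
`v_{2ⁿ}` comparable to `v̂(r_n)`. Hence the integrals `t_n` of `(1 - s)² / v̂(s)` over
`(r_{n+1}, 1)` drop by at least a fixed positive multiple of `β_n` from `n` to `n + 1`, while the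
finiteness of `M₂(v)` bounds `t_n` by a multiple of `β_n`. A nonnegative sequence that loses a fixed
proportion of itself at each step decays geometrically, so `t`, and with it `β`, decays
geometrically, and so does `β ^ q`.
-/

section Sequences

variable {b t : ℕ → ℝ} {c K q : ℝ}

lemma le_pow_mul_of_le_mul_succ {a : ℕ → ℝ} {C : ℝ} (ha : ∀ n, 0 ≤ a n) (hC : 1 ≤ C)
    (h : ∀ n, a n ≤ C * a (n + 1)) (n j : ℕ) : a (n - j) ≤ C ^ j * a n := by
  have : 0 ≤ C := zero_le_one.trans hC
  induction n generalizing j with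
  | zero => simpa using le_mul_of_one_le_left (ha 0) (one_le_pow₀ hC)
  | succ n ih =>
    cases j with
    | zero => simp
    | succ j =>
      calc a (n + 1 - (j + 1)) = a (n - j) := by rw [Nat.add_sub_add_right]
        _ ≤ C ^ j * a n := ih j
        _ ≤ C ^ j * (C * a (n + 1)) := by gcongr; exact h n
        _ = C ^ (j + 1) * a (n + 1) := by ring

lemma geometric_decay_of_le_tail (hc : 0 < c) (hK : 0 < K) (hb : ∀ n, 0 ≤ b n)
    (ht : ∀ n, 0 ≤ t n) (hdrop : ∀ n, c * b n + t (n + 1) ≤ t n) (hle : ∀ n, t n ≤ K * b n)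
    (k m : ℕ) : b (m + k) ≤ K / c * (K / (K + c)) ^ m * b k := by
  have hstep (n : ℕ) : t (n + 1) ≤ K / (K + c) * t n := by
    rw [div_mul_eq_mul_div, le_div_iff₀ (by positivity)]
    have hmono : t (n + 1) ≤ t n := by linarith [hdrop n, mul_nonneg hc.le (hb n)]
    calc t (n + 1) * (K + c) = K * t (n + 1) + c * t (n + 1) := by ring
      _ ≤ K * (t n - c * b n) + c * (K * b n) := by
          gcongr
          · linarith [hdrop n]
          · exact hmono.trans (hle n)
      _ = K * t n := by ring
  have hdecay : t (m + k) ≤ (K / (K + c)) ^ m * t k := by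
    induction m with
    | zero => simp
    | succ m ih =>
      calc t (m + 1 + k) = t (m + k + 1) := by rw [Nat.add_right_comm]
        _ ≤ K / (K + c) * t (m + k) := hstep _
        _ ≤ K / (K + c) * ((K / (K + c)) ^ m * t k) := by gcongr
        _ = (K / (K + c)) ^ (m + 1) * t k := by ring
  calc b (m + k) = c * b (m + k) / c := by field_simp
    _ ≤ t (m + k) / c := by gcongr; linarith [hdrop (m + k), ht (m + k + 1)]
    _ ≤ (K / (K + c)) ^ m * (K * b k) / c := by
        gcongr
        exact hdecay.trans (by gcongr; exact hle k)
    _ = K / c * (K / (K + c)) ^ m * b k := by ring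

lemma tsum_ofReal_rpow_le_of_geometric_decay {G ρ : ℝ} (hb : ∀ n, 0 ≤ b n) (hG : 0 ≤ G)
    (hρ₀ : 0 ≤ ρ) (hρ₁ : ρ < 1) (hq : 0 < q) (h : ∀ k m, b (m + k) ≤ G * ρ ^ m * b k) (k : ℕ) :
    ∑' m, ENNReal.ofReal (b (m + k) ^ q) ≤ ENNReal.ofReal (G ^ q / (1 - ρ ^ q) * b k ^ q) := by
  have hbk := hb k
  have hterm (m : ℕ) : b (m + k) ^ q ≤ (ρ ^ q) ^ m * (G ^ q * b k ^ q) := by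
    calc b (m + k) ^ q ≤ (G * ρ ^ m * b k) ^ q := Real.rpow_le_rpow (hb _) (h k m) hq.le
      _ = (ρ ^ q) ^ m * (G ^ q * b k ^ q) := by
        rw [Real.mul_rpow (by positivity) hbk, Real.mul_rpow hG (by positivity),
          Real.rpow_pow_comm hρ₀]
        ring
  have hsum : HasSum (fun m : ℕ => (ρ ^ q) ^ m * (G ^ q * b k ^ q))
      ((1 - ρ ^ q)⁻¹ * (G ^ q * b k ^ q)) :=
    (hasSum_geometric_of_lt_one (by positivity) (Real.rpow_lt_one hρ₀ hρ₁ hq)).mul_right _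
  calc ∑' m, ENNReal.ofReal (b (m + k) ^ q)
      ≤ ∑' m : ℕ, ENNReal.ofReal ((ρ ^ q) ^ m * (G ^ q * b k ^ q)) :=
        ENNReal.tsum_le_tsum fun m => ENNReal.ofReal_le_ofReal (hterm m)
    _ = ENNReal.ofReal ((1 - ρ ^ q)⁻¹ * (G ^ q * b k ^ q)) := by
        rw [← ENNReal.ofReal_tsum_of_nonneg (fun m => by positivity) hsum.summable, hsum.tsum_eq]
    _ = ENNReal.ofReal (G ^ q / (1 - ρ ^ q) * b k ^ q) := by ring_nf

lemma exists_tsum_ofReal_rpow_le_of_le_tail (hc : 0 < c) (hb : ∀ n, 0 < b n) (ht : ∀ n, 0 ≤ t n)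
    (hdrop : ∀ n, c * b n + t (n + 1) ≤ t n) (hle : ∀ n, t n ≤ K * b n) (hq : 0 < q) :
    ∃ C, 0 < C ∧ ∀ k,
      ∑' m, ENNReal.ofReal (b (m + k) ^ q) ≤ ENNReal.ofReal (C * b k ^ q) := by
  have hK : 0 < K := by
    have : c * b 0 ≤ K * b 0 := by linarith [hdrop 0, hle 0, ht 1]
    exact hc.trans_le (le_of_mul_le_mul_right this (hb 0))
  have hρ : K / (K + c) < 1 := (div_lt_one (by positivity)).2 (by linarith)
  have hρq : (K / (K + c)) ^ q < 1 := Real.rpow_lt_one (by positivity) hρ hq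
  exact ⟨(K / c) ^ q / (1 - (K / (K + c)) ^ q), div_pos (by positivity) (by linarith),
    tsum_ofReal_rpow_le_of_geometric_decay (fun n => (hb n).le) (by positivity) (by positivity)
      hρ hq (geometric_decay_of_le_tail hc hK (fun n => (hb n).le) ht hdrop hle)⟩

end Sequences

/-- The dyadic points `r_n = 1 - 2⁻ⁿ` of `[0, 1)`, starting from `r_0 = 0`. The doubling condition
compares `v̂` at consecutive ones. -/
def dyadicPoint (n : ℕ) : ℝ := 1 - (1 / 2) ^ n

lemma dyadicPoint_zero : dyadicPoint 0 = 0 := by simp [dyadicPoint]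

lemma dyadicPoint_succ (n : ℕ) : dyadicPoint (n + 1) = (1 + dyadicPoint n) / 2 := by
  simp only [dyadicPoint, pow_succ]; ring

lemma dyadicPoint_nonneg (n : ℕ) : 0 ≤ dyadicPoint n :=
  sub_nonneg.2 (pow_le_one₀ (by norm_num) (by norm_num))

lemma dyadicPoint_lt_one (n : ℕ) : dyadicPoint n < 1 := sub_lt_self _ (by positivity)

lemma half_le_dyadicPoint_succ (n : ℕ) : 1 / 2 ≤ dyadicPoint (n + 1) := by
  linarith [dyadicPoint_succ n, dyadicPoint_nonneg n]

lemma one_sub_dyadicPoint_pow_three (n : ℕ) : (1 - dyadicPoint n) ^ 3 = (1 / 8) ^ n := by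
  rw [dyadicPoint, sub_sub_cancel, pow_right_comm]; norm_num

lemma one_fourth_le_dyadicPoint_pow (n : ℕ) :
    1 / 4 ≤ dyadicPoint (n + 1) ^ 2 ^ (n + 1) := by
  have bernoulli : 1 / 2 ≤ dyadicPoint (n + 1) ^ 2 ^ n := by
    have hsmall : (1 / 2 : ℝ) ^ (n + 1) ≤ 1 := pow_le_one₀ (by norm_num) (by norm_num)
    calc (1 / 2 : ℝ) = 1 + ((2 ^ n : ℕ) : ℝ) * -(1 / 2) ^ (n + 1) := by
          push_cast; rw [one_div_pow, pow_succ]; field_simp; norm_num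
      _ ≤ (1 + -(1 / 2) ^ (n + 1)) ^ 2 ^ n := one_add_mul_le_pow (by linarith) _
      _ = dyadicPoint (n + 1) ^ 2 ^ n := by rw [dyadicPoint, sub_eq_add_neg]
  calc (1 / 4 : ℝ) = (1 / 2) ^ 2 := by norm_num
    _ ≤ (dyadicPoint (n + 1) ^ 2 ^ n) ^ 2 := by gcongr
    _ = dyadicPoint (n + 1) ^ 2 ^ (n + 1) := by rw [← pow_mul, pow_succ]

lemma dyadicPoint_sub_pow_le_exp (n j : ℕ) :
    dyadicPoint (n - j) ^ 2 ^ n ≤ Real.exp (-2 ^ j) := by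
  rcases le_total n j with hnj | hjn
  · rw [Nat.sub_eq_zero_of_le hnj, dyadicPoint_zero, zero_pow (by positivity)]
    positivity
  · obtain ⟨i, rfl⟩ := Nat.exists_eq_add_of_le' hjn
    have h := Real.one_sub_div_pow_le_exp_neg (n := 2 ^ (i + j)) (t := 2 ^ j)
      (by exact_mod_cast Nat.pow_le_pow_right two_pos (Nat.le_add_left j i))
    have hpoint : dyadicPoint i = 1 - 2 ^ j / ((2 ^ (i + j) : ℕ) : ℝ) := by
      rw [dyadicPoint]; push_cast; rw [pow_add, one_div_pow]; field_simp
    rwa [Nat.add_sub_cancel, hpoint]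

namespace RadialWeight

variable {v : ℝ → ℝ} {a b c d r s : ℝ}

lemma nonneg (hv : RadialWeight v) (hs₀ : 0 ≤ s) (hs₁ : s < 1) : 0 ≤ v s :=
  (hv.2.1 s ⟨hs₀, hs₁⟩).le

lemma intervalIntegrable_pow_mul (hv : RadialWeight v) (N : ℕ) (ha : 0 ≤ a) (hab : a ≤ b)
    (hb : b ≤ 1) : IntervalIntegrable (fun s => s ^ N * v s) volume a b := by
  have h : IntervalIntegrable v volume a b := by
    rw [intervalIntegrable_iff_integrableOn_Ioo_of_le hab]
    exact hv.2.2.mono_set (Ioo_subset_Ioo ha hb)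
  exact h.continuousOn_mul (by fun_prop)

lemma intervalIntegrable (hv : RadialWeight v) (ha : 0 ≤ a) (hab : a ≤ b) (hb : b ≤ 1) :
    IntervalIntegrable v volume a b := by
  simpa using hv.intervalIntegrable_pow_mul 0 ha hab hb

lemma integral_pow_mul_mono_interval (hv : RadialWeight v) (N : ℕ) (hc : 0 ≤ c) (hca : c ≤ a)
    (hab : a ≤ b) (hbd : b ≤ d) (hd : d ≤ 1) :
    ∫ s in a..b, s ^ N * v s ≤ ∫ s in c..d, s ^ N * v s := by
  refine intervalIntegral.integral_mono_interval hca hab hbd ?_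
    (hv.intervalIntegrable_pow_mul N hc (hca.trans (hab.trans hbd)) hd)
  rw [← restrict_Ioo_eq_restrict_Ioc]
  filter_upwards [ae_restrict_mem measurableSet_Ioo] with s hs
  exact mul_nonneg (pow_nonneg (hc.trans hs.1.le) N)
    (hv.nonneg (hc.trans hs.1.le) (hs.2.trans_le hd))

lemma hatw_pos (hv : RadialWeight v) (hr₀ : 0 ≤ r) (hr₁ : r < 1) : 0 < hatw v r :=
  intervalIntegral.intervalIntegral_pos_of_pos_on (hv.intervalIntegrable hr₀ hr₁.le le_rfl)
    (fun s hs => hv.2.1 s ⟨hr₀.trans hs.1.le, hs.2⟩) hr₁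

lemma hatw_le_hatw (hv : RadialWeight v) (hr : 0 ≤ r) (hrs : r ≤ s) (hs : s ≤ 1) :
    hatw v s ≤ hatw v r := by
  simpa [hatw] using hv.integral_pow_mul_mono_interval 0 hr hrs hs le_rfl le_rfl

lemma pow_mul_hatw_le_vx (hv : RadialWeight v) (N : ℕ) (hr₀ : 0 ≤ r) (hr₁ : r ≤ 1) :
    r ^ N * hatw v r ≤ vx v N := by
  calc r ^ N * hatw v r = ∫ s in r..1, r ^ N * v s := by
        rw [hatw, intervalIntegral.integral_const_mul]
    _ ≤ ∫ s in r..1, s ^ N * v s :=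
        intervalIntegral.integral_mono_on_of_le_Ioo hr₁
          ((hv.intervalIntegrable hr₀ hr₁ le_rfl).const_mul _)
          (hv.intervalIntegrable_pow_mul N hr₀ hr₁ le_rfl) fun s hs =>
            mul_le_mul_of_nonneg_right (pow_le_pow_left₀ hr₀ hs.1.le N)
              (hv.nonneg (hr₀.trans hs.1.le) hs.2)
    _ ≤ vx v N := hv.integral_pow_mul_mono_interval N le_rfl hr₀ hr₁ le_rfl le_rfl

lemma vx_pos (hv : RadialWeight v) (N : ℕ) : 0 < vx v N :=
  (mul_pos (by positivity) (hv.hatw_pos one_half_pos.le one_half_lt_one)).trans_le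
    (hv.pow_mul_hatw_le_vx N one_half_pos.le one_half_lt_one.le)

lemma vx_add_le (hv : RadialWeight v) (M N : ℕ) (hr₀ : 0 ≤ r) (hr₁ : r ≤ 1) :
    vx v (M + N) ≤ hatw v r + r ^ M * vx v N := by
  have hnear : ∫ s in r..1, s ^ (M + N) * v s ≤ hatw v r :=
    intervalIntegral.integral_mono_on_of_le_Ioo hr₁
      (hv.intervalIntegrable_pow_mul _ hr₀ hr₁ le_rfl) (hv.intervalIntegrable hr₀ hr₁ le_rfl)
      fun s hs => mul_le_of_le_one_left (hv.nonneg (hr₀.trans hs.1.le) hs.2)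
        (pow_le_one₀ (hr₀.trans hs.1.le) hs.2.le)
  have hfar : ∫ s in 0..r, s ^ (M + N) * v s ≤ r ^ M * vx v N :=
    calc ∫ s in 0..r, s ^ (M + N) * v s ≤ ∫ s in 0..r, r ^ M * (s ^ N * v s) := by
          refine intervalIntegral.integral_mono_on_of_le_Ioo hr₀
            (hv.intervalIntegrable_pow_mul _ le_rfl hr₀ hr₁)
            ((hv.intervalIntegrable_pow_mul N le_rfl hr₀ hr₁).const_mul _) fun s hs => ?_
          rw [pow_add, mul_assoc]
          exact mul_le_mul_of_nonneg_right (pow_le_pow_left₀ hs.1.le hs.2.le M)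
            (mul_nonneg (pow_nonneg hs.1.le N) (hv.nonneg hs.1.le (hs.2.trans_le hr₁)))
      _ = r ^ M * ∫ s in 0..r, s ^ N * v s := intervalIntegral.integral_const_mul _ _
      _ ≤ r ^ M * vx v N := by
          gcongr
          exact hv.integral_pow_mul_mono_interval N le_rfl le_rfl hr₀ hr₁ le_rfl
  rw [vx, ← intervalIntegral.integral_add_adjacent_intervals
    (hv.intervalIntegrable_pow_mul _ le_rfl hr₀ hr₁)
    (hv.intervalIntegrable_pow_mul _ hr₀ hr₁ le_rfl)]
  linarith

lemma hatw_dyadicPoint_pos (hv : RadialWeight v) (n : ℕ) : 0 < hatw v (dyadicPoint n) :=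
  hv.hatw_pos (dyadicPoint_nonneg n) (dyadicPoint_lt_one n)

lemma hatw_dyadicPoint_le_four_mul_vx (hv : RadialWeight v) (n : ℕ) :
    hatw v (dyadicPoint (n + 1)) ≤ 4 * vx v (2 ^ (n + 1)) := by
  linarith [hv.pow_mul_hatw_le_vx (2 ^ (n + 1)) (dyadicPoint_nonneg (n + 1))
      (dyadicPoint_lt_one (n + 1)).le,
    mul_le_mul_of_nonneg_right (one_fourth_le_dyadicPoint_pow n)
      (hv.hatw_dyadicPoint_pos (n + 1)).le]

lemma exists_vx_two_pow_le (hv : RadialWeight v) (hD : DoublingD v) :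
    ∃ D, 0 < D ∧ ∀ n, vx v (2 ^ n) ≤ D * hatw v (dyadicPoint n) := by
  obtain ⟨C, hC, hdoubling⟩ := hD
  have : 0 < C := zero_lt_one.trans_le hC
  have hpos := hv.hatw_dyadicPoint_pos
  have hsucc (n : ℕ) : hatw v (dyadicPoint n) ≤ C * hatw v (dyadicPoint (n + 1)) := by
    rw [dyadicPoint_succ]
    exact hdoubling _ ⟨dyadicPoint_nonneg n, dyadicPoint_lt_one n⟩
  obtain ⟨j, hj⟩ := exists_nat_ge (2 * C)
  have hexp : Real.exp (-2 ^ j) ≤ (2 * C)⁻¹ := by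
    rw [Real.exp_neg]
    have hj2 : (j : ℝ) ≤ 2 ^ j := by exact_mod_cast Nat.lt_two_pow_self.le
    exact inv_anti₀ (by positivity) (by linarith [Real.add_one_le_exp ((2 : ℝ) ^ j)])
  refine ⟨2 * C ^ (j + 1), by positivity, fun n => ?_⟩
  induction n with
  | zero =>
    calc vx v (2 ^ 0) ≤ hatw v (dyadicPoint 0) := by
          simpa [dyadicPoint_zero] using hv.vx_add_le 1 0 le_rfl zero_le_one
      _ ≤ 2 * C ^ (j + 1) * hatw v (dyadicPoint 0) :=
          le_mul_of_one_le_left (hpos 0).le (by linarith [one_le_pow₀ hC (n := j + 1)])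
  | succ n ih =>
    -- Splitting the moment at `r_{n-j}`, the contraction `(2C)⁻¹` absorbs the doubling constant.
    -- If `n < j`, the subtraction truncates and `r_0 = 0` kills the second term.
    calc vx v (2 ^ (n + 1)) = vx v (2 ^ n + 2 ^ n) := by rw [pow_succ, mul_two]
      _ ≤ hatw v (dyadicPoint (n - j)) + dyadicPoint (n - j) ^ 2 ^ n * vx v (2 ^ n) :=
          hv.vx_add_le _ _ (dyadicPoint_nonneg _) (dyadicPoint_lt_one _).le
      _ ≤ C ^ j * hatw v (dyadicPoint n) +
            (2 * C)⁻¹ * (2 * C ^ (j + 1) * hatw v (dyadicPoint n)) :=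
          add_le_add (le_pow_mul_of_le_mul_succ (fun i => (hpos i).le) hC hsucc n j)
            (mul_le_mul ((dyadicPoint_sub_pow_le_exp n j).trans hexp) ih (hv.vx_pos _).le
              (by positivity))
      _ = 2 * C ^ j * hatw v (dyadicPoint n) := by field_simp; ring
      _ ≤ 2 * C ^ j * (C * hatw v (dyadicPoint (n + 1))) := by gcongr; exact hsucc n
      _ = 2 * C ^ (j + 1) * hatw v (dyadicPoint (n + 1)) := by ring

end RadialWeight

lemma ofReal_mul_sub_le_setLIntegral_Ioo {f : ℝ → ℝ} {a b m : ℝ} (hab : a ≤ b)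
    (h : ∀ s ∈ Ioo a b, m ≤ f s) :
    ENNReal.ofReal (m * (b - a)) ≤ ∫⁻ s in Ioo a b, ENNReal.ofReal (f s) := by
  calc ENNReal.ofReal (m * (b - a)) = ∫⁻ _ in Ioo a b, ENNReal.ofReal m := by
        rw [setLIntegral_const, Real.volume_Ioo, ENNReal.ofReal_mul' (sub_nonneg.2 hab)]
    _ ≤ ∫⁻ s in Ioo a b, ENNReal.ofReal (f s) :=
        setLIntegral_mono' measurableSet_Ioo fun s hs => ENNReal.ofReal_le_ofReal (h s hs)

/-- The head `∫_0^r v̂(s) / (1 - s)⁴ ds`, the first of the two integrals in `M2v`. -/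
def m2Head (v : ℝ → ℝ) (r : ℝ) : ENNReal :=
  ∫⁻ s in Ioo 0 r, ENNReal.ofReal (hatw v s / (1 - s) ^ 4)

/-- The tail `∫_r^1 (1 - s)² / v̂(s) ds`, the second of the two integrals in `M2v`. -/
def m2Tail (v : ℝ → ℝ) (r : ℝ) : ENNReal :=
  ∫⁻ s in Ioo r 1, ENNReal.ofReal ((1 - s) ^ 2 / hatw v s)

lemma m2Head_mul_m2Tail_le (v : ℝ → ℝ) {r : ℝ} (hr : r ∈ Ioo (0 : ℝ) 1) :
    m2Head v r * m2Tail v r ≤ M2v v ^ 2 := by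
  have h : m2Head v r ^ (1 / 2 : ℝ) * m2Tail v r ^ (1 / 2 : ℝ) ≤ M2v v :=
    le_iSup₂ (f := fun r (_ : r ∈ Ioo (0 : ℝ) 1) =>
      m2Head v r ^ (1 / 2 : ℝ) * m2Tail v r ^ (1 / 2 : ℝ)) r hr
  calc m2Head v r * m2Tail v r = (m2Head v r ^ (1 / 2 : ℝ) * m2Tail v r ^ (1 / 2 : ℝ)) ^ 2 := by
        rw [mul_pow, ← ENNReal.rpow_mul_natCast, ← ENNReal.rpow_mul_natCast]
        norm_num
    _ ≤ M2v v ^ 2 := by gcongr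

namespace RadialWeight

variable {v : ℝ → ℝ} {r : ℝ}

lemma hatw_div_le_m2Head (hv : RadialWeight v) (hr : 1 / 2 ≤ r) (hr₁ : r < 1) :
    ENNReal.ofReal (hatw v r / (16 * (1 - r) ^ 3)) ≤ m2Head v r := by
  have hbound (s : ℝ) (hs : s ∈ Ioo (2 * r - 1) r) :
      hatw v r / (2 * (1 - r)) ^ 4 ≤ hatw v s / (1 - s) ^ 4 := by
    have h1s : 0 < 1 - s := by linarith [hs.2]
    have hs₀ : 0 ≤ s := by linarith [hs.1]
    exact div_le_div₀ (hv.hatw_pos hs₀ (hs.2.trans hr₁)).le (hv.hatw_le_hatw hs₀ hs.2.le hr₁.le)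
      (by positivity) (pow_le_pow_left₀ h1s.le (by linarith [hs.1]) 4)
  have h1r : 1 - r ≠ 0 := (sub_pos.2 hr₁).ne'
  calc ENNReal.ofReal (hatw v r / (16 * (1 - r) ^ 3))
      = ENNReal.ofReal (hatw v r / (2 * (1 - r)) ^ 4 * (r - (2 * r - 1))) := by
        congr 1; field_simp; ring
    _ ≤ ∫⁻ s in Ioo (2 * r - 1) r, ENNReal.ofReal (hatw v s / (1 - s) ^ 4) :=
        ofReal_mul_sub_le_setLIntegral_Ioo (by linarith) hbound
    _ ≤ m2Head v r := lintegral_mono_set (Ioo_subset_Ioo_left (by linarith))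

lemma div_hatw_add_m2Tail_le (hv : RadialWeight v) (hr₀ : 0 ≤ r) (hr₁ : r < 1) :
    ENNReal.ofReal ((1 - r) ^ 3 / (8 * hatw v r)) + m2Tail v ((1 + r) / 2) ≤ m2Tail v r := by
  have hbound (s : ℝ) (hs : s ∈ Ioo r ((1 + r) / 2)) :
      ((1 - r) / 2) ^ 2 / hatw v r ≤ (1 - s) ^ 2 / hatw v s := by
    have hs₁ : s < 1 := by linarith [hs.2]
    exact div_le_div₀ (sq_nonneg _) (pow_le_pow_left₀ (by linarith) (by linarith [hs.2]) 2)
      (hv.hatw_pos (hr₀.trans hs.1.le) hs₁) (hv.hatw_le_hatw hr₀ hs.1.le hs₁.le)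
  have hleft : ENNReal.ofReal ((1 - r) ^ 3 / (8 * hatw v r)) ≤
      ∫⁻ s in Ioo r ((1 + r) / 2), ENNReal.ofReal ((1 - s) ^ 2 / hatw v s) := by
    refine le_of_eq_of_le ?_ (ofReal_mul_sub_le_setLIntegral_Ioo (by linarith) hbound)
    have := (hv.hatw_pos hr₀ hr₁).ne'
    congr 1; field_simp; ring
  have hdisj : Disjoint (Ioo r ((1 + r) / 2)) (Ioo ((1 + r) / 2) 1) :=
    Set.disjoint_left.2 fun s hs hs' => lt_asymm hs.2 hs'.1
  calc ENNReal.ofReal ((1 - r) ^ 3 / (8 * hatw v r)) + m2Tail v ((1 + r) / 2)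
      ≤ (∫⁻ s in Ioo r ((1 + r) / 2), ENNReal.ofReal ((1 - s) ^ 2 / hatw v s)) +
          m2Tail v ((1 + r) / 2) := by gcongr
    _ = ∫⁻ s in Ioo r ((1 + r) / 2) ∪ Ioo ((1 + r) / 2) 1,
          ENNReal.ofReal ((1 - s) ^ 2 / hatw v s) :=
        (lintegral_union measurableSet_Ioo hdisj).symm
    _ ≤ m2Tail v r := lintegral_mono_set
        (union_subset (Ioo_subset_Ioo_right (by linarith)) (Ioo_subset_Ioo_left (by linarith)))

lemma m2Tail_le (hv : RadialWeight v) (hM2 : M2v v < ⊤) (hr : 1 / 2 ≤ r) (hr₁ : r < 1) :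
    m2Tail v r ≤ ENNReal.ofReal (16 * (M2v v).toReal ^ 2 * ((1 - r) ^ 3 / hatw v r)) := by
  have hhat : 0 < hatw v r := hv.hatw_pos (by linarith) hr₁
  have h1r : 0 < 1 - r := sub_pos.2 hr₁
  have hhead : 0 < hatw v r / (16 * (1 - r) ^ 3) := by positivity
  have hprod : m2Tail v r * ENNReal.ofReal (hatw v r / (16 * (1 - r) ^ 3)) ≤
      ENNReal.ofReal ((M2v v).toReal ^ 2) := by
    rw [ENNReal.ofReal_pow ENNReal.toReal_nonneg, ENNReal.ofReal_toReal hM2.ne, mul_comm]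
    exact (mul_le_mul_left (hv.hatw_div_le_m2Head hr hr₁) _).trans
      (m2Head_mul_m2Tail_le v ⟨by linarith, hr₁⟩)
  calc m2Tail v r
      ≤ ENNReal.ofReal ((M2v v).toReal ^ 2) / ENNReal.ofReal (hatw v r / (16 * (1 - r) ^ 3)) :=
        (ENNReal.le_div_iff_mul_le (Or.inl (by simpa using hhead)) (Or.inl ENNReal.ofReal_ne_top)).2
          hprod
    _ = ENNReal.ofReal (16 * (M2v v).toReal ^ 2 * ((1 - r) ^ 3 / hatw v r)) := by
        rw [← ENNReal.ofReal_div_of_pos hhead]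
        congr 1; field_simp

lemma m2Tail_dyadicPoint_ne_top (hv : RadialWeight v) (hM2 : M2v v < ⊤) (n : ℕ) :
    m2Tail v (dyadicPoint (n + 1)) ≠ ⊤ :=
  ((hv.m2Tail_le hM2 (half_le_dyadicPoint_succ n) (dyadicPoint_lt_one _)).trans_lt
    ENNReal.ofReal_lt_top).ne

lemma div_vx_add_toReal_m2Tail_le (hv : RadialWeight v) (hM2 : M2v v < ⊤) (n : ℕ) :
    1 / 256 * ((1 / 8) ^ n / vx v (2 ^ (n + 1))) + (m2Tail v (dyadicPoint (n + 2))).toReal ≤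
      (m2Tail v (dyadicPoint (n + 1))).toReal := by
  have hhat := hv.hatw_dyadicPoint_pos (n + 1)
  have hvx := hv.vx_pos (2 ^ (n + 1))
  have htail := ENNReal.toReal_mono (hv.m2Tail_dyadicPoint_ne_top hM2 n)
    (hv.div_hatw_add_m2Tail_le (dyadicPoint_nonneg (n + 1)) (dyadicPoint_lt_one (n + 1)))
  rw [← dyadicPoint_succ, one_sub_dyadicPoint_pow_three, ENNReal.toReal_add ENNReal.ofReal_ne_top
    (hv.m2Tail_dyadicPoint_ne_top hM2 (n + 1)), ENNReal.toReal_ofReal (by positivity)] at htail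
  refine le_trans ?_ htail
  gcongr
  calc 1 / 256 * ((1 / 8) ^ n / vx v (2 ^ (n + 1)))
      = (1 / 8) ^ (n + 1) / (8 * (4 * vx v (2 ^ (n + 1)))) := by
        field_simp; ring
    _ ≤ (1 / 8) ^ (n + 1) / (8 * hatw v (dyadicPoint (n + 1))) := by
        gcongr; exact hv.hatw_dyadicPoint_le_four_mul_vx n

lemma exists_toReal_m2Tail_le (hv : RadialWeight v) (hD : DoublingD v) (hM2 : M2v v < ⊤) :
    ∃ K, ∀ n, (m2Tail v (dyadicPoint (n + 1))).toReal ≤ K * ((1 / 8) ^ n / vx v (2 ^ (n + 1))) := by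
  obtain ⟨D, hD₀, hvx_le⟩ := hv.exists_vx_two_pow_le hD
  refine ⟨2 * (M2v v).toReal ^ 2 * D, fun n => ?_⟩
  have hhat := hv.hatw_dyadicPoint_pos (n + 1)
  have hvx := hv.vx_pos (2 ^ (n + 1))
  have htail := hv.m2Tail_le hM2 (half_le_dyadicPoint_succ n) (dyadicPoint_lt_one _)
  rw [one_sub_dyadicPoint_pow_three] at htail
  calc (m2Tail v (dyadicPoint (n + 1))).toReal
      ≤ 16 * (M2v v).toReal ^ 2 * ((1 / 8) ^ (n + 1) / hatw v (dyadicPoint (n + 1))) :=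
        ENNReal.toReal_le_of_le_ofReal (by positivity) htail
    _ ≤ 16 * (M2v v).toReal ^ 2 * ((1 / 8) ^ (n + 1) / (vx v (2 ^ (n + 1)) / D)) := by
        gcongr
        rw [div_le_iff₀' hD₀]
        exact hvx_le (n + 1)
    _ = 2 * (M2v v).toReal ^ 2 * D * ((1 / 8) ^ n / vx v (2 ^ (n + 1))) := by
        field_simp; ring

end RadialWeight

lemma two_rpow_mul_rpow_neg (q : ℝ) (n : ℕ) {y : ℝ} (hy : 0 ≤ y) :
    (2 : ℝ) ^ (-(3 * q * n)) * y ^ (-q) = ((1 / 8) ^ n / y) ^ q := by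
  have h8 : ((1 / 8 : ℝ) ^ n) = 2 ^ (-(3 * n : ℝ)) := by
    rw [Real.rpow_neg two_pos.le, Real.rpow_mul two_pos.le, Real.rpow_natCast, one_div, inv_pow]
    norm_num
  rw [Real.div_rpow (by positivity) hy, Real.rpow_neg hy, div_eq_mul_inv, h8,
    ← Real.rpow_mul two_pos.le]
  ring_nf

/-- Lemma 3.5: if `v ∈ D̂` and `M₂(v) < ∞` then for every `q > 0`,
`Σ_{n=k}^∞ 2^{-3qn} v_{2^{n+1}}^{-q} ≤ C 2^{-3qk} v_{2^{k+1}}^{-q}`. -/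
theorem statement11 (v : ℝ → ℝ) (hv : RadialWeight v) (hD : DoublingD v)
    (hM2 : M2v v < ⊤) :
    ∀ q : ℝ, 0 < q → ∃ C : ℝ, 0 < C ∧ ∀ k : ℕ,
      (∑' m : ℕ, ENNReal.ofReal
          ((2:ℝ) ^ (-(3 * q * ((m + k : ℕ) : ℝ))) * (vx v (2^(m+k+1))) ^ (-q))) ≤
        ENNReal.ofReal (C * (2:ℝ) ^ (-(3 * q * (k:ℝ))) * (vx v (2^(k+1))) ^ (-q)) := by
  intro q hq
  obtain ⟨K, hK⟩ := hv.exists_toReal_m2Tail_le hD hM2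
  have hβ (n : ℕ) : 0 < (1 / 8 : ℝ) ^ n / vx v (2 ^ (n + 1)) :=
    div_pos (by positivity) (hv.vx_pos _)
  obtain ⟨C, hC, hsum⟩ := exists_tsum_ofReal_rpow_le_of_le_tail (by norm_num) hβ
    (fun _ => ENNReal.toReal_nonneg) (hv.div_vx_add_toReal_m2Tail_le hM2) hK hq
  refine ⟨C, hC, fun k => ?_⟩
  simp only [mul_assoc C, two_rpow_mul_rpow_neg q _ (hv.vx_pos _).le]
  exact hsum k

end
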